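/- arXiv:1907.03192 — 2 statements merged into one kernel-verified Lean document; each statement's English description precedes it below -/
import Mathlib

section
/- Let G = (V, E) be a finite connected graph, η a probability measure on V, and Γ = {γ_{xy} : x, y ∈ V} a collection containing, for each pair of vertices x, y ∈ V, one path γ_{xy} in G from x to y. Let l_max(Γ) = max_{γ ∈ Γ} (number of edges of γ) and, for each edge e ∈ E, b(e, Γ) = #{γ ∈ Γ : γ contains e}. Then for every function f : V → ℝ, with f̄ = Σ_{x ∈ V} f(x)·η(x), one has Σ_{x ∈ V} (f(x) − f̄)²·η(x) ≤ κ·Σ_{x ∈ V} Σ_{y ∈ V, y ∼ x} (f(x) − f(y))², where κ = 0.5·(max_{z ∈ V} η(z)²)·l_max(Γ)·max_{e ∈ E} b(e, Γ) and the inner double sum ranges over all ordered pairs of adjacent vertices. -/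
/-!
The variance of `f` under `η` is `½ ∑_{x,y} (f x - f y)² η x η y`, and `η x η y ≤ max η²`.
Each difference `f x - f y` telescopes along a path from `x` to `y`, so by Cauchy–Schwarz
(`sq_sub_le_length_mul`) its square is at most the length times the sum of the squared increments
over the darts whose edge is visited. Summing over all pairs and exchanging the sums, each dart is
counted `b e` times.

The chosen walks may repeat edges, whereas `b e` counts each walk once; replacing a walk by its
bypass, a path with no more edges, all taken from the walk, removes this discrepancy. Each edge
carries two darts and a path uses at most one of them, so summing over darts rather than edges only
loses a factor that the constant allows.
-/

open SimpleGraph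
open scoped Classical

theorem sub_eq_sum_darts {V : Type*} {G : SimpleGraph V} (f : V → ℝ) {x y : V}
    (p : G.Walk x y) : f x - f y = (p.darts.map (fun d => f d.fst - f d.snd)).sum := by
  induction p with
  | nil => simp
  | cons h p ih =>
    simp only [Walk.darts_cons, List.map_cons, List.sum_cons, ← ih]
    ring

/-- The walk `p` may repeat edges, but the sum on the right counts each visited dart once. -/
theorem sq_sub_le_length_mul {V : Type*} [Fintype V] [DecidableEq V] {G : SimpleGraph V}
    [DecidableRel G.Adj] (f : V → ℝ) {x y : V} (p : G.Walk x y) :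
    (f x - f y) ^ 2 ≤ p.length *
      ∑ d : G.Dart, if d.edge ∈ p.edges then (f d.fst - f d.snd) ^ 2 else 0 := by
  set q := p.bypass with hq
  have hnd : q.darts.Nodup := List.Nodup.of_map _ (p.bypass_isPath.isTrail.edges_nodup)
  have hlen : q.length ≤ p.length := p.length_bypass_le_length
  have hcard : q.darts.toFinset.card = q.length := by
    rw [List.toFinset_card_of_nodup hnd, Walk.length_darts]
  have htel : f x - f y = ∑ d ∈ q.darts.toFinset, (f d.fst - f d.snd) := by
    rw [sub_eq_sum_darts f q, List.sum_toFinset _ hnd]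
  have hsum : ∑ d ∈ q.darts.toFinset, (f d.fst - f d.snd) ^ 2 ≤
      ∑ d : G.Dart, if d.edge ∈ p.edges then (f d.fst - f d.snd) ^ 2 else 0 := by
    rw [← Finset.sum_filter]
    refine Finset.sum_le_sum_of_subset_of_nonneg ?_ (fun _ _ _ => sq_nonneg _)
    intro d hd
    rw [List.mem_toFinset] at hd
    simp only [Finset.mem_filter, Finset.mem_univ, true_and]
    exact p.edges_bypass_subset_edges (List.mem_map_of_mem hd)
  rw [htel]
  refine sq_sum_le_card_mul_sum_sq.trans ?_
  rw [hcard]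
  exact mul_le_mul (by exact_mod_cast hlen) hsum
    (Finset.sum_nonneg fun _ _ => sq_nonneg _) (Nat.cast_nonneg _)

theorem sum_darts_eq {V : Type*} [Fintype V] (G : SimpleGraph V) [DecidableRel G.Adj]
    (g : V → V → ℝ) :
    ∑ d : G.Dart, g d.fst d.snd = ∑ x, ∑ y ∈ Finset.univ.filter (fun y => G.Adj x y), g x y := by
  rw [Finset.sum_sigma']
  refine Finset.sum_bij' (fun d _ => ⟨d.fst, d.snd⟩)
    (fun s hs => ⟨(s.1, s.2), by simpa using hs⟩) ?_ ?_ ?_ ?_ ?_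
  · intro d _
    simp
  all_goals simp

theorem variance_eq_half_sum {V : Type*} [Fintype V] (η f : V → ℝ) (hη1 : ∑ x, η x = 1) :
    ∑ x, (f x - ∑ z, f z * η z) ^ 2 * η x =
      1 / 2 * ∑ x, ∑ y, (f x - f y) ^ 2 * (η x * η y) := by
  set m := ∑ z, f z * η z with hm
  have h1 : ∑ x, (f x - m) ^ 2 * η x = ∑ x, f x ^ 2 * η x - m ^ 2 := by
    have : ∀ x, (f x - m) ^ 2 * η x = f x ^ 2 * η x - 2 * m * (f x * η x) + m ^ 2 * η x :=
      fun x => by ring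
    simp only [this, Finset.sum_add_distrib, Finset.sum_sub_distrib, ← Finset.mul_sum, hη1, ← hm]
    ring
  have h2 : ∀ x, ∑ y, (f x - f y) ^ 2 * (η x * η y) =
      f x ^ 2 * η x - 2 * m * (f x * η x) + (∑ y, f y ^ 2 * η y) * η x := by
    intro x
    have : ∀ y, (f x - f y) ^ 2 * (η x * η y) = f x ^ 2 * η x * η y
        - 2 * (f x * η x) * (f y * η y) + η x * (f y ^ 2 * η y) := fun y => by ring
    simp only [this, Finset.sum_add_distrib, Finset.sum_sub_distrib, ← Finset.mul_sum, hη1, ← hm]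
    ring
  simp only [h1, h2, Finset.sum_add_distrib, Finset.sum_sub_distrib, ← Finset.mul_sum, hη1, ← hm]
  ring

/-- general structure of the Poincaré-type inequality: for a finite
connected graph `G`, a probability measure `η` on the vertices, and a collection `Γ`
consisting of one walk `γ x y` from `x` to `y` for each pair of vertices, every function
`f : V → ℝ` satisfies
`Σ_x (f(x) − f̄)²·η(x) ≤ κ·Σ_x Σ_{y ∼ x} (f(x) − f(y))²` with
`κ = 0.5·(max_z η(z)²)·l_max(Γ)·max_e b(e,Γ)`. -/
theorem stmt10 {V : Type*} [Fintype V] [DecidableEq V] (G : SimpleGraph V)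
    [DecidableRel G.Adj] (hconn : G.Connected)
    (η : V → ℝ) (hη : ∀ x, 0 ≤ η x) (hη1 : ∑ x, η x = 1)
    (γ : ∀ x y : V, G.Walk x y)
    (lmax : ℕ) (hlmax : lmax = Finset.univ.sup (fun p : V × V => (γ p.1 p.2).length))
    (b : Sym2 V → ℕ)
    (hb : ∀ e, b e = ((Finset.univ : Finset (V × V)).filter
      (fun p => e ∈ (γ p.1 p.2).edges)).card)
    (bmax : ℕ) (hbmax : bmax = G.edgeFinset.sup b)
    (κ : ℝ) (hκ : κ = 0.5 * (Finset.univ.sup'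
      (Finset.univ_nonempty_iff.mpr hconn.nonempty) (fun z => (η z) ^ 2)) *
      (lmax : ℝ) * (bmax : ℝ))
    (f : V → ℝ) :
    ∑ x, (f x - ∑ z, f z * η z) ^ 2 * η x ≤
      κ * ∑ x, ∑ y ∈ Finset.univ.filter (fun y => G.Adj x y), (f x - f y) ^ 2 := by
  set M := Finset.univ.sup' (Finset.univ_nonempty_iff.mpr hconn.nonempty)
    (fun z => (η z) ^ 2) with hM
  have hMle : ∀ z, η z ^ 2 ≤ M := fun z =>
    Finset.le_sup' (fun z => (η z) ^ 2) (Finset.mem_univ z)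
  have hM0 : 0 ≤ M := by
    obtain ⟨z⟩ := hconn.nonempty
    exact (sq_nonneg _).trans (hMle z)
  have hprod : ∀ x y, η x * η y ≤ M := fun x y => by
    nlinarith [sq_nonneg (η x - η y), hMle x, hMle y]
  have hlen : ∀ p : V × V, (γ p.1 p.2).length ≤ lmax := fun p => by
    rw [hlmax]
    exact Finset.le_sup (f := fun p : V × V => (γ p.1 p.2).length) (Finset.mem_univ p)
  have hbd : ∀ d : G.Dart, b d.edge ≤ bmax := fun d => by
    rw [hbmax]
    exact Finset.le_sup (by simp)
  have hpair : ∑ p : V × V, (f p.1 - f p.2) ^ 2 ≤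
      lmax * (bmax * ∑ d : G.Dart, (f d.fst - f d.snd) ^ 2) := by
    calc ∑ p : V × V, (f p.1 - f p.2) ^ 2
        ≤ ∑ p : V × V, (lmax : ℝ) * ∑ d : G.Dart,
            if d.edge ∈ (γ p.1 p.2).edges then (f d.fst - f d.snd) ^ 2 else 0 := by
          refine Finset.sum_le_sum fun p _ => (sq_sub_le_length_mul f (γ p.1 p.2)).trans ?_
          have hp : ((γ p.1 p.2).length : ℝ) ≤ lmax := Nat.cast_le.mpr (hlen p)
          refine mul_le_mul_of_nonneg_right hp (Finset.sum_nonneg fun d _ => ?_)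
          split_ifs
          · exact sq_nonneg _
          · exact le_rfl
      _ = lmax * ∑ d : G.Dart, b d.edge * (f d.fst - f d.snd) ^ 2 := by
          rw [← Finset.mul_sum, Finset.sum_comm]
          congr 1
          refine Finset.sum_congr rfl fun d _ => ?_
          rw [← Finset.sum_filter, Finset.sum_const, nsmul_eq_mul, hb]
      _ ≤ _ := by
          refine mul_le_mul_of_nonneg_left ?_ (Nat.cast_nonneg _)
          rw [Finset.mul_sum]
          exact Finset.sum_le_sum fun d _ =>
            mul_le_mul_of_nonneg_right (Nat.cast_le.mpr (hbd d)) (sq_nonneg _)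
  rw [variance_eq_half_sum η f hη1, ← sum_darts_eq G (fun x y => (f x - f y) ^ 2), hκ]
  have hM' : ∑ x, ∑ y, (f x - f y) ^ 2 * (η x * η y) ≤ M * ∑ p : V × V, (f p.1 - f p.2) ^ 2 := by
    rw [Fintype.sum_prod_type, Finset.mul_sum]
    refine Finset.sum_le_sum fun x _ => ?_
    rw [Finset.mul_sum]
    refine Finset.sum_le_sum fun y _ => ?_
    rw [mul_comm M]
    exact mul_le_mul_of_nonneg_left (hprod x y) (sq_nonneg _)
  have := hM'.trans (mul_le_mul_of_nonneg_left hpair hM0)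
  linarith
end

section
/- Let (M, d_M) be a metric space and μ a Borel probability measure on M satisfying the volume doubling condition with constant v > 0: 0 < μ(B_M(x, 2r)) ≤ 2^v·μ(B_M(x, r)) < ∞ for all x ∈ M and all r > 0, where B_M(x,r) is the open metric ball. Let V ⊆ M be a finite set of n points, G a connected graph on V with open shortest-path balls B_SP(x,r), let λ₁, λ₂ ∈ (0,1), ε > 0 and δ ≥ 0, and let η₁(W) = |W|/n for W ⊆ V. Assume: (a) for all x ∈ V and all r > 0, B_SP(x, r) ⊆ V ∩ B_M(x, (1−λ₁)^{-1}·ε·r) and V ∩ B_M(x, r) ⊆ B_SP(x, 4·(1+λ₂)·ε^{-1}·r + 1); (b) for all x ∈ V and all r > 0, η₁(V ∩ B_M(x, r)) ≤ (3/2)·μ(B_M(x, r)) + 3δ² and μ(B_M(x, r)) ≤ (3/2)·η₁(V ∩ B_M(x, r)) + 3δ². Then for every x ∈ V and every real r > 1 with η₁(B_SP(x, r)) ≥ 2δ², one has η₁(B_SP(x, 2r)) ≤ 2^u·η₁(B_SP(x, r)), where u = log₂(6) + ⌈4 + log₂((1+λ₂)/(1−λ₁))⌉·v. -/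
/-!
Put `R = (1 - λ₁)⁻¹ ε (2r)`, so that `B_SP(x, 2r) ⊆ B_M(x, R)`. Graph distances are integers, so
`B_SP(x, r) = B_SP(x, k)` with `k = ⌈r⌉ ≥ 2`, and hence `V ∩ B_M(x, s) ⊆ B_SP(x, r)` for
`s = ε (k - 1) / (4 (1 + λ₂))`. Since `r ≤ k ≤ 2 (k - 1)`, the ratio satisfies
`R / s ≤ 16 (1 + λ₂) / (1 - λ₁) ≤ 2 ^ m` with `m = ⌈4 + log₂ ((1 + λ₂) / (1 - λ₁))⌉`, and `m`-fold
doubling gives `μ(B_M(x, R)) ≤ 2 ^ (m v) μ(B_M(x, s))`. Writing `A = η₁(B_SP(x, r)) ≥ 2δ²`, the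
comparison of `η₁` and `μ` yields
`η₁(B_SP(x, 2r)) ≤ 3/2 · 2 ^ (m v) (3/2 A + 3δ²) + 3δ² ≤ 6 · 2 ^ (m v) A`.
The passage from `r` to `⌈r⌉` is essential: working with `r - 1` in place of `k - 1` would give an
unbounded ratio as `r → 1`.
-/

open SimpleGraph MeasureTheory
open scoped Classical

/-- The open ball of radius `r` around `x` in the shortest-path metric of a graph. -/
noncomputable def ballSP {V : Type*} [Fintype V] (G : SimpleGraph V) (x : V) (r : ℝ) :
    Finset V :=
  Finset.univ.filter (fun y => (G.dist x y : ℝ) < r)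

/-- Shortest-path distances are integers, so a ball does not change when its radius is
rounded up. -/
lemma ballSP_natCeil {V : Type*} [Fintype V] (G : SimpleGraph V) (x : V) (r : ℝ) :
    ballSP G x (⌈r⌉₊ : ℝ) = ballSP G x r := by
  ext y
  simp [ballSP, Nat.lt_ceil]

/-- The doubling inequality iterated `m` times. -/
lemma measure_ball_two_pow_mul_le {M : Type*} [MetricSpace M] [MeasurableSpace M]
    (μ : Measure M) (v : ℝ)
    (hVD : ∀ (x : M) (r : ℝ), 0 < r →
      (μ (Metric.ball x (2 * r))).toReal ≤ (2 : ℝ) ^ v * (μ (Metric.ball x r)).toReal)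
    (x : M) (s : ℝ) (hs : 0 < s) (m : ℕ) :
    (μ (Metric.ball x (2 ^ m * s))).toReal ≤
      ((2 : ℝ) ^ v) ^ m * (μ (Metric.ball x s)).toReal := by
  induction m with
  | zero => simp
  | succ m ih =>
    have h := hVD x (2 ^ m * s) (by positivity)
    rw [← mul_assoc, ← pow_succ'] at h
    calc _ ≤ _ := h
      _ ≤ (2 : ℝ) ^ v * (((2 : ℝ) ^ v) ^ m * (μ (Metric.ball x s)).toReal) := by gcongr
      _ = _ := by ring

/-- volume doubling for the graph, deterministic form: let `μ` be a Borel
probability measure on a metric space `M` satisfying volume doubling with constant `v`, `V ⊆ M`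
a set of `n` points carrying a connected graph `G`, and suppose (a) the shortest-path balls
and metric balls are mutually comparable via `λ₁, λ₂, ε`, and (b) the empirical measure
`η₁` and `μ` of metric balls centered at vertices are mutually comparable up to factor `3/2`
and additive error `3δ²`. Then every shortest-path ball of radius `r > 1` with
`η₁(B_SP(x,r)) ≥ 2δ²` satisfies `η₁(B_SP(x,2r)) ≤ 2^u·η₁(B_SP(x,r))` with
`u = log₂ 6 + ⌈4 + log₂((1+λ₂)/(1−λ₁))⌉·v`. -/
theorem stmt15 {M : Type*} [MetricSpace M] [MeasurableSpace M] [BorelSpace M]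
    (μ : Measure M) [IsProbabilityMeasure μ]
    (v : ℝ) (hv : 0 < v)
    (hVD : ∀ (x : M) (r : ℝ), 0 < r →
      0 < (μ (Metric.ball x (2 * r))).toReal ∧
      (μ (Metric.ball x (2 * r))).toReal ≤ (2 : ℝ) ^ v * (μ (Metric.ball x r)).toReal)
    (V : Finset M) (n : ℕ) (hn : n = V.card)
    (G : SimpleGraph {x // x ∈ V}) (hconn : G.Connected)
    (lam₁ lam₂ : ℝ) (hlam₁ : lam₁ ∈ Set.Ioo (0 : ℝ) 1) (hlam₂ : lam₂ ∈ Set.Ioo (0 : ℝ) 1)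
    (ε : ℝ) (hε : 0 < ε) (δ : ℝ) (hδ : 0 ≤ δ)
    (ha : ∀ (x : {x // x ∈ V}) (r : ℝ), 0 < r →
      (∀ y ∈ ballSP G x r, (y : M) ∈ Metric.ball (x : M) ((1 - lam₁)⁻¹ * ε * r)) ∧
      (∀ y : {x // x ∈ V}, (y : M) ∈ Metric.ball (x : M) r →
        y ∈ ballSP G x (4 * (1 + lam₂) * ε⁻¹ * r + 1)))
    (hb : ∀ (x : {x // x ∈ V}) (r : ℝ), 0 < r →
      ((Finset.univ.filter
          (fun y : {x // x ∈ V} => (y : M) ∈ Metric.ball (x : M) r)).card : ℝ) / n ≤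
        3 / 2 * (μ (Metric.ball (x : M) r)).toReal + 3 * δ ^ 2 ∧
      (μ (Metric.ball (x : M) r)).toReal ≤
        3 / 2 * (((Finset.univ.filter
          (fun y : {x // x ∈ V} => (y : M) ∈ Metric.ball (x : M) r)).card : ℝ) / n) +
          3 * δ ^ 2) :
    ∀ (x : {x // x ∈ V}) (r : ℝ), 1 < r →
      2 * δ ^ 2 ≤ ((ballSP G x r).card : ℝ) / n →
      ((ballSP G x (2 * r)).card : ℝ) / n ≤
        (2 : ℝ) ^ (Real.logb 2 6 +
            (⌈(4 : ℝ) + Real.logb 2 ((1 + lam₂) / (1 - lam₁))⌉ : ℝ) * v) *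
          (((ballSP G x r).card : ℝ) / n) := by
  intro x r hr hA
  obtain ⟨hl₀, hl₁⟩ := hlam₁
  obtain ⟨hl₂, -⟩ := hlam₂
  have h₁ : 0 < 1 - lam₁ := by linarith
  have h₂ : 0 < 1 + lam₂ := by linarith
  set q := (1 + lam₂) / (1 - lam₁) with hq
  have hq1 : 1 ≤ q := by rw [hq, le_div_iff₀ h₁]; linarith
  have hlog : 0 ≤ Real.logb 2 q := Real.logb_nonneg (by norm_num) hq1
  -- the exponent is nonnegative, so the doubling inequality can be iterated that many times
  obtain ⟨m, hm⟩ : ∃ m : ℕ, ⌈(4 : ℝ) + Real.logb 2 q⌉ = (m : ℤ) :=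
    Int.eq_ofNat_of_zero_le (Int.ceil_nonneg (by linarith))
  have hm16 : 16 * q ≤ 2 ^ m := by
    have h := Int.le_ceil ((4 : ℝ) + Real.logb 2 q)
    rw [hm, Int.cast_natCast] at h
    calc 16 * q = (2 : ℝ) ^ ((4 : ℝ) + Real.logb 2 q) := by
          rw [Real.rpow_add (by norm_num), Real.rpow_logb (by norm_num) (by norm_num)
            (by linarith)]
          norm_num
      _ ≤ (2 : ℝ) ^ (m : ℝ) := Real.rpow_le_rpow_of_exponent_le (by norm_num) h
      _ = 2 ^ m := Real.rpow_natCast 2 m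
  set k := ⌈r⌉₊ with hk
  have hrk : r ≤ k := Nat.le_ceil r
  have hk2 : (2 : ℝ) ≤ k := by
    have : 1 < k := Nat.lt_ceil.2 (by simpa using hr)
    exact_mod_cast this
  set s := ε * (k - 1) / (4 * (1 + lam₂)) with hs
  have hs0 : 0 < s := div_pos (mul_pos hε (by linarith)) (by linarith)
  have hR : (1 - lam₁)⁻¹ * ε * (2 * r) ≤ 2 ^ m * s := by
    calc (1 - lam₁)⁻¹ * ε * (2 * r) ≤ (1 - lam₁)⁻¹ * ε * (2 * (2 * (k - 1))) := by
          gcongr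
          linarith
      _ = 16 * q * s := by
          rw [hq, hs]
          field_simp
          ring
      _ ≤ 2 ^ m * s := by gcongr
  have hdouble := measure_ball_two_pow_mul_le μ v (fun x r h => (hVD x r h).2) x s hs0 m
  have hup := (hb x (2 ^ m * s) (by positivity)).1
  have hlow := (hb x s hs0).2
  have hcard_up : ((ballSP G x (2 * r)).card : ℝ) / n ≤
      ((Finset.univ.filter (fun y : {x // x ∈ V} =>
        (y : M) ∈ Metric.ball (x : M) (2 ^ m * s))).card : ℝ) / n := by
    gcongr
    intro y hy
    simp only [Finset.mem_filter, Finset.mem_univ, true_and]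
    exact Metric.ball_subset_ball hR ((ha x (2 * r) (by linarith)).1 y hy)
  have hcard_low : ((Finset.univ.filter (fun y : {x // x ∈ V} =>
        (y : M) ∈ Metric.ball (x : M) s)).card : ℝ) / n ≤ ((ballSP G x r).card : ℝ) / n := by
    gcongr
    intro y hy
    simp only [Finset.mem_filter, Finset.mem_univ, true_and] at hy
    have h := (ha x s hs0).2 y hy
    have hsk : 4 * (1 + lam₂) * ε⁻¹ * s + 1 = k := by
      rw [hs]
      field_simp
      ring
    rwa [hsk, hk, ballSP_natCeil] at h
  have hexp : (2 : ℝ) ^ (Real.logb 2 6 + ((m : ℤ) : ℝ) * v) = 6 * ((2 : ℝ) ^ v) ^ m := by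
    rw [Real.rpow_add (by norm_num), Real.rpow_logb (by norm_num) (by norm_num) (by norm_num),
      Int.cast_natCast, mul_comm (m : ℝ) v, Real.rpow_mul (by norm_num), Real.rpow_natCast]
  rw [hm, hexp]
  set A := ((ballSP G x r).card : ℝ) / n
  set C := ((2 : ℝ) ^ v) ^ m
  have hC : 1 ≤ C := one_le_pow₀ (Real.one_le_rpow (by norm_num) hv.le)
  have hA0 : 0 ≤ A := by positivity
  have hμ : (μ (Metric.ball (x : M) s)).toReal ≤ 3 * A := by linarith
  have hCμ : C * (μ (Metric.ball (x : M) s)).toReal ≤ C * (3 * A) := by gcongr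
  have hCA : A ≤ C * A := le_mul_of_one_le_left hA0 hC
  linarith
end
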